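/- arXiv:math/0701756 — 2 statements merged into one kernel-verified Lean document; each statement's English description precedes it below -/
import Mathlib

section
/- Let A♯ and A♯′ be two self-adjoint extensions of A, let z₀ ∉ Sp(A♯) ∪ Sp(A♯′) and ψ₀ ∈ Ker(A* − z₀I) nonzero, and set ψ(z) := ψ₀ + (z − z₀)(A♯ − zI)⁻¹ψ₀ and ψ′(z) := ψ₀ + (z − z₀)(A♯′ − zI)⁻¹ψ₀. Then for every z ∉ Sp(A♯) ∪ Sp(A♯′) there is a scalar g(z) ∈ ℂ with ψ′(z) = g(z)ψ(z); consequently, for a gauge μ, the vector ξ(z) := ψ(z̄)/⟨μ, ψ(z̄)⟩ does not depend on the self-adjoint extension used to define ψ, i.e. ψ(z̄)/⟨μ, ψ(z̄)⟩ = ψ′(z̄)/⟨μ, ψ′(z̄)⟩ whenever both are defined. Moreover the map z ↦ ξ(z̄) is analytic on the open set {z ∈ ℂ : z̄ ∉ S_μ}. -/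
/-!
The vector `ψ(z)` is a nonzero element of the line `Ker(A* - z)`: it is annihilated by `A* - z`
because `B ≤ A*`, and it equals `(B - z₀) R(z) ψ₀`, so it does not vanish.  Two such vectors built
from different extensions are therefore proportional, and normalising by `⟪μ, ·⟫` removes the factor.

For analyticity, if `z̄ ∉ S_μ` then `Ker(A* - z) = ran(A - z̄)ᗮ` contains exactly one vector `ξ` with
`⟪μ, ξ⟫ = 1`, and `Ξ(z)` is that vector; this makes sense also at spectral points of `B`.  Near a
point `z₁` of the set, with `ξ₁ = Ξ(z₁)`, let `Q v` be the solution in `dom A` of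
`(A - z̄₁) Q v = v - ⟪ξ₁, v⟫ μ`.  It exists since `H = ran(A - z̄₁) ∔ span μ`, and regularity makes `Q`
a bounded operator (`exists_gaugeInverse`).  Then `η(z) = (1 - (z - z₁) Q*)⁻¹ ξ₁` lies in
`Ker(A* - z)` and satisfies `⟪η(z), μ⟫ = 1` because `Q μ = 0` (`normalized_of_fixedPoint`).  Hence
`Ξ = η` near `z₁`, and `η` is analytic since inversion in a Banach algebra is.
-/

open scoped ComplexConjugate
open Complex

noncomputable section

variable {H : Type*} [NormedAddCommGroup H] [InnerProductSpace ℂ H] [CompleteSpace H]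

local notation "⟪" x ", " y "⟫" => @inner ℂ _ _ x y

/-- The range of `T - z·I`, as a subset of `H`. -/
def ranShift (T : H →ₗ.[ℂ] H) (z : ℂ) : Set H :=
  Set.range fun φ : T.domain => T φ - z • (φ : H)

/-- `ψ` belongs to the kernel of `T - z·I`. -/
def InKerShift (T : H →ₗ.[ℂ] H) (z : ℂ) (ψ : H) : Prop :=
  ∃ h : ψ ∈ T.domain, T ⟨ψ, h⟩ = z • ψ

/-- `H = ran(A - z·I) ∔ span{μ}` (direct algebraic sum): every vector has a unique
decomposition `v = r + c • μ` with `r ∈ ran(A - z·I)`. -/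
def GaugeSplit (A : H →ₗ.[ℂ] H) (μ : H) (z : ℂ) : Prop :=
  ∀ v : H, ∃! c : ℂ, v - c • μ ∈ ranShift A z

/-- The exceptional set `S_μ`. -/
def Smu (A : H →ₗ.[ℂ] H) (μ : H) : Set ℂ := {z | ¬ GaugeSplit A μ z}

/-- `A` is simple: `⋂_{Im z ≠ 0} ran(A - z·I) = {0}`. -/
def IsSimpleOp (A : H →ₗ.[ℂ] H) : Prop :=
  (⋂ z ∈ {w : ℂ | w.im ≠ 0}, ranShift A z) = ({0} : Set H)

/-- `A` is regular: every `z ∈ ℂ` is a point of regular type, i.e. `A - z·I` has a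
bounded inverse on its range. -/
def IsRegularOp (A : H →ₗ.[ℂ] H) : Prop :=
  ∀ z : ℂ, ∃ c : ℝ, 0 < c ∧ ∀ φ : A.domain, c * ‖(φ : H)‖ ≤ ‖A φ - z • (φ : H)‖

/-- `A` has deficiency indices `(1,1)`: for every `z ∈ ℂ`, the kernel of `A* - z·I`
is spanned by a single nonzero vector. -/
def DefIndicesOneOne (A : H →ₗ.[ℂ] H) : Prop :=
  ∀ z : ℂ, ∃ v : H, v ≠ 0 ∧
    {ψ : H | InKerShift A.adjoint z ψ} = {w : H | ∃ c : ℂ, w = c • v}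

/-- `A` is symmetric. -/
def IsSymmetricPOp (A : H →ₗ.[ℂ] H) : Prop :=
  ∀ x y : A.domain, ⟪(A x : H), (y : H)⟫ = ⟪(x : H), (A y : H)⟫

/-- The data of a densely defined, closed, symmetric, simple, regular operator with
deficiency indices (1,1): the setting of Krein's theory. -/
structure KreinOp (H : Type*) [NormedAddCommGroup H] [InnerProductSpace ℂ H]
    [CompleteSpace H] where
  A : H →ₗ.[ℂ] H
  dense : Dense (A.domain : Set H)
  closed : A.IsClosed
  symm : IsSymmetricPOp A
  simple : IsSimpleOp A
  regular : IsRegularOp A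
  defOneOne : DefIndicesOneOne A

/-- `B` is a self-adjoint extension of `A` (within `H`). -/
def IsSAExt (A B : H →ₗ.[ℂ] H) : Prop :=
  A ≤ B ∧ IsSelfAdjoint B

/-- `R z` is, for every `z ∈ res`, the (everywhere defined, bounded) inverse of `B - z·I`;
in particular `res ⊆ ℂ ∖ Sp(B)`. -/
def IsResolventOn (B : H →ₗ.[ℂ] H) (res : Set ℂ) (R : ℂ → H →L[ℂ] H) : Prop :=
  ∀ z ∈ res, (∀ v : H, ∃ h : R z v ∈ B.domain, B ⟨R z v, h⟩ - z • R z v = v)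
    ∧ ∀ φ : B.domain, R z ((B φ : H) - z • (φ : H)) = (φ : H)

/-- `ψ(z) = ψ₀ + (z - z₀)(B - z·I)⁻¹ ψ₀`. -/
def psiFun (R : ℂ → H →L[ℂ] H) (z₀ : ℂ) (ψ₀ : H) (z : ℂ) : H :=
  ψ₀ + (z - z₀) • R z ψ₀

/-- `ξ(z) = ψ(z̄) / ⟪μ, ψ(z̄)⟫`. -/
def xiFun (μ : H) (R : ℂ → H →L[ℂ] H) (z₀ : ℂ) (ψ₀ : H) (z : ℂ) : H :=
  (⟪μ, psiFun R z₀ ψ₀ (conj z)⟫)⁻¹ • psiFun R z₀ ψ₀ (conj z)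

/-- `P` is the orthogonal projection onto `Ker(B - x·I)`. -/
def IsEigenProjection (B : H →ₗ.[ℂ] H) (x : ℝ) (P : H →L[ℂ] H) : Prop :=
  IsSelfAdjoint P ∧ (∀ v : H, P (P v) = P v) ∧ ∀ v : H, (P v = v ↔ InKerShift B (x : ℂ) v)


/-- `Ker(T* - z)` is the orthogonal complement of `ran(T - z̄)`. -/
lemma inKerShift_adjoint_iff {T : H →ₗ.[ℂ] H} (hT : Dense (T.domain : Set H)) (z : ℂ) (ψ : H) :
    InKerShift T.adjoint z ψ ↔ ∀ x : T.domain, ⟪ψ, T x - conj z • (x : H)⟫ = 0 := by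
  constructor
  · rintro ⟨h, e⟩ x
    have := LinearPMap.adjoint_isFormalAdjoint hT ⟨ψ, h⟩ x
    rw [e, inner_smul_left] at this
    rw [inner_sub_right, inner_smul_right, ← this, sub_self]
  · intro h
    have key : ∀ x : T.domain, ⟪z • ψ, (x : H)⟫ = ⟪ψ, T x⟫ := fun x => by
      have := h x
      rw [inner_sub_right, inner_smul_right, sub_eq_zero] at this
      rw [inner_smul_left, this]
    exact ⟨LinearPMap.mem_adjoint_domain_of_exists ψ ⟨_, key⟩,
      LinearPMap.adjoint_apply_eq hT _ key⟩

/-- Since `ψ(z) = (B - z₀) R(z) ψ₀` and both `B - z₀` and `R(z)` are injective, `ψ(z) ≠ 0`. -/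
lemma psiFun_ne_zero {B : H →ₗ.[ℂ] H} {res : Set ℂ} {R : ℂ → H →L[ℂ] H}
    (hR : IsResolventOn B res R) {z₀ z : ℂ} (hz₀ : z₀ ∈ res) (hz : z ∈ res) {ψ₀ : H}
    (hne : ψ₀ ≠ 0) : psiFun R z₀ ψ₀ z ≠ 0 := by
  intro h0
  obtain ⟨hd, e⟩ := (hR z hz).1 ψ₀
  have h1 : B ⟨R z ψ₀, hd⟩ - z₀ • R z ψ₀ = psiFun R z₀ ψ₀ z := by
    rw [psiFun]
    linear_combination (norm := module) e
  have h2 := (hR z₀ hz₀).2 ⟨R z ψ₀, hd⟩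
  rw [h1, h0, map_zero] at h2
  apply hne
  have h3 : (⟨R z ψ₀, hd⟩ : B.domain) = 0 := Subtype.ext h2.symm
  have h4 : R z ψ₀ = 0 := h2.symm
  rw [← e, h3, h4]
  simp

lemma psiFun_mem_ker {A B : H →ₗ.[ℂ] H} (hA : Dense (A.domain : Set H)) (hB : IsSAExt A B)
    {res : Set ℂ} {R : ℂ → H →L[ℂ] H} (hR : IsResolventOn B res R) {z₀ z : ℂ} (hz : z ∈ res)
    {ψ₀ : H} (hψ₀ : InKerShift A.adjoint z₀ ψ₀) :
    InKerShift A.adjoint z (psiFun R z₀ ψ₀ z) := by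
  rw [inKerShift_adjoint_iff hA] at hψ₀ ⊢
  intro x
  obtain ⟨hd, e⟩ := (hR z hz).1 ψ₀
  have hx : (x : H) ∈ B.domain := hB.1.1 x.2
  have hAB : A x = B ⟨x, hx⟩ := hB.1.2 rfl
  have hsymm : B.IsFormalAdjoint B := by
    have h := LinearPMap.adjoint_isFormalAdjoint (T := B) hB.2.dense_domain
    rwa [LinearPMap.isSelfAdjoint_def.mp hB.2] at h
  have h1 : ⟪B ⟨R z ψ₀, hd⟩, (x : H)⟫ = ⟪R z ψ₀, A x⟫ := by
    rw [hAB]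
    exact hsymm ⟨R z ψ₀, hd⟩ ⟨x, hx⟩
  rw [sub_eq_iff_eq_add.mp e, inner_add_left, inner_smul_left] at h1
  have h0 := hψ₀ x
  simp only [psiFun, inner_sub_right, inner_smul_right, inner_add_left, inner_smul_left, map_sub]
    at h0 ⊢
  linear_combination h0 - (conj z - conj z₀) * h1

lemma exists_eq_smul_of_ker (S : KreinOp H) {z : ℂ} {a b : H} (ha : InKerShift S.A.adjoint z a)
    (hb : InKerShift S.A.adjoint z b) (ha0 : a ≠ 0) : ∃ g : ℂ, b = g • a := by
  obtain ⟨v, -, hv⟩ := S.defOneOne z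
  obtain ⟨c, rfl⟩ : a ∈ {w : H | ∃ c : ℂ, w = c • v} := hv ▸ ha
  obtain ⟨d, rfl⟩ : b ∈ {w : H | ∃ c : ℂ, w = c • v} := hv ▸ hb
  have hc : c ≠ 0 := by
    rintro rfl
    simp at ha0
  exact ⟨d / c, by rw [smul_smul, div_mul_cancel₀ _ hc]⟩

/-- Normalisation by `⟪μ, ·⟫` does not see a scalar factor. -/
lemma normalize_smul (μ a : H) {g : ℂ} (hg : g ≠ 0) :
    (⟪μ, g • a⟫)⁻¹ • (g • a) = (⟪μ, a⟫)⁻¹ • a := by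
  rw [inner_smul_right, smul_smul, mul_inv, mul_right_comm, inv_mul_cancel₀ hg, one_mul]

/-- A nonzero vector of `Ker(A* - z)` is orthogonal to `ran(A - z̄)`, so it cannot also be orthogonal
to a complement of that range. -/
lemma inner_ne_zero_of_gaugeSplit {A : H →ₗ.[ℂ] H} {μ ψ : H} {w : ℂ} (hG : GaugeSplit A μ w)
    (hψ : ∀ x : A.domain, ⟪ψ, A x - w • (x : H)⟫ = 0) (h0 : ψ ≠ 0) : ⟪μ, ψ⟫ ≠ 0 := by
  intro h
  obtain ⟨c, ⟨x, hx⟩, -⟩ := hG ψ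
  have h1 := hψ x
  have h2 : ⟪ψ, μ⟫ = 0 := by rw [← inner_conj_symm, h, map_zero]
  simp only at hx
  rw [hx, inner_sub_right, inner_smul_right, h2, mul_zero, sub_zero] at h1
  exact h0 (inner_self_eq_zero.mp h1)

/-- The bounded operator `Q` inverting `A - w` modulo the gauge: `(A - w) Q v = v - ⟪ξ, v⟫ μ`.
The functional `⟪ξ, ·⟫` computes the coefficient along `μ`, and the lower bound on `A - w` gives both
linearity and boundedness of `Q`. -/
lemma exists_gaugeInverse {A : H →ₗ.[ℂ] H} (hA : IsRegularOp A) {μ ξ : H} {w : ℂ}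
    (hG : GaugeSplit A μ w) (hξ : ∀ x : A.domain, ⟪ξ, A x - w • (x : H)⟫ = 0)
    (hξμ : ⟪ξ, μ⟫ = 1) :
    ∃ Q : H →L[ℂ] H, Q μ = 0 ∧ ∀ x : A.domain, Q (A x - w • (x : H)) = x := by
  obtain ⟨k, hk, hreg⟩ := hA w
  have hinj : ∀ x y : A.domain, A x - w • (x : H) = A y - w • (y : H) → x = y := by
    intro x y h
    have h1 := hreg (x - y)
    have h2 : A (x - y) - w • ((x - y : A.domain) : H) = 0 := by
      rw [A.map_sub, Submodule.coe_sub, smul_sub]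
      linear_combination (norm := module) h
    rw [h2, norm_zero] at h1
    have h3 : ‖((x - y : A.domain) : H)‖ = 0 :=
      le_antisymm (nonpos_of_mul_nonpos_right h1 hk) (norm_nonneg _)
    exact sub_eq_zero.mp (Subtype.ext (norm_eq_zero.mp h3))
  have hex : ∀ v : H, ∃ x : A.domain, A x - w • (x : H) = v - ⟪ξ, v⟫ • μ := by
    intro v
    obtain ⟨c, ⟨x, hx⟩, -⟩ := hG v
    simp only at hx
    have h1 := hξ x
    rw [hx, inner_sub_right, inner_smul_right, hξμ, mul_one, sub_eq_zero] at h1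
    exact ⟨x, by rw [hx, h1]⟩
  choose q hq using hex
  let L : H →ₗ[ℂ] H :=
    { toFun := fun v => q v
      map_add' := fun u v => by
        rw [← Submodule.coe_add]
        refine congrArg _ (hinj _ _ ?_)
        rw [hq, A.map_add, Submodule.coe_add, inner_add_right]
        linear_combination (norm := module) - hq u - hq v
      map_smul' := fun c v => by
        rw [RingHom.id_apply, ← Submodule.coe_smul]
        refine congrArg _ (hinj _ _ ?_)
        rw [hq, A.map_smul, Submodule.coe_smul, inner_smul_right, smul_comm w c, ← smul_sub, hq,
          smul_sub, smul_smul] }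
  have hbound : ∀ v, ‖L v‖ ≤ ((1 + ‖ξ‖ * ‖μ‖) / k) * ‖v‖ := by
    intro v
    have h1 : k * ‖L v‖ ≤ ‖v - ⟪ξ, v⟫ • μ‖ := hq v ▸ hreg (q v)
    have h2 : ‖v - ⟪ξ, v⟫ • μ‖ ≤ ‖v‖ + ‖ξ‖ * ‖v‖ * ‖μ‖ := by
      refine (norm_sub_le _ _).trans ?_
      rw [norm_smul]
      gcongr
      exact norm_inner_le_norm _ _
    rw [div_mul_eq_mul_div, le_div_iff₀ hk]
    linarith
  refine ⟨L.mkContinuous _ hbound, ?_, fun x => ?_⟩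
  · change ((q μ : A.domain) : H) = ((0 : A.domain) : H)
    refine congrArg _ (hinj _ _ ?_)
    rw [hq, hξμ]
    simp
  · change ((q _ : A.domain) : H) = x
    refine congrArg _ (hinj _ _ ?_)
    rw [hq, hξ, zero_smul, sub_zero]

/-- A solution `η` of `η = (z - z₁) Q* η + ξ` is the normalised vector of `Ker(A* - z)`. -/
lemma normalized_of_fixedPoint {A : H →ₗ.[ℂ] H} (hA : Dense (A.domain : Set H)) {μ ξ η : H}
    {z z₁ : ℂ} {Q : H →L[ℂ] H} (hQμ : Q μ = 0)
    (hQ : ∀ x : A.domain, Q (A x - conj z₁ • (x : H)) = x)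
    (hξ : ∀ x : A.domain, ⟪ξ, A x - conj z₁ • (x : H)⟫ = 0) (hξμ : ⟪ξ, μ⟫ = 1)
    (hη : η = (z - z₁) • ContinuousLinearMap.adjoint Q η + ξ) :
    InKerShift A.adjoint z η ∧ ⟪μ, η⟫ = 1 := by
  have key : ∀ v, ⟪η, v⟫ = conj (z - z₁) * ⟪η, Q v⟫ + ⟪ξ, v⟫ := fun v => by
    conv_lhs => rw [hη]
    rw [inner_add_left, inner_smul_left, ContinuousLinearMap.adjoint_inner_left]
  constructor
  · rw [inKerShift_adjoint_iff hA]
    intro x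
    have h := key (A x - conj z₁ • (x : H))
    rw [hQ, hξ] at h
    simp only [inner_sub_right, inner_smul_right, map_sub] at h ⊢
    linear_combination h
  · rw [← inner_conj_symm, key, hQμ, hξμ]
    simp

open Classical in
/-- The vector `ξ ∈ Ker(A* - z)` normalised by `⟪μ, ξ⟫ = 1`, and `0` when there is none. -/
def normalizedKer (A : H →ₗ.[ℂ] H) (μ : H) (z : ℂ) : H :=
  if h : ∃ ξ : H, InKerShift A.adjoint z ξ ∧ ⟪μ, ξ⟫ = 1 then h.choose else 0

lemma normalizedKer_eq (S : KreinOp H) {μ ξ : H} {z : ℂ} (hξ : InKerShift S.A.adjoint z ξ)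
    (h1 : ⟪μ, ξ⟫ = 1) : normalizedKer S.A μ z = ξ := by
  have h : ∃ ξ : H, InKerShift S.A.adjoint z ξ ∧ ⟪μ, ξ⟫ = 1 := ⟨ξ, hξ, h1⟩
  rw [normalizedKer, dif_pos h]
  have hne : ξ ≠ 0 := by
    rintro rfl
    simp at h1
  obtain ⟨g, hg⟩ := exists_eq_smul_of_ker S hξ h.choose_spec.1 hne
  have h2 := h.choose_spec.2
  rw [hg, inner_smul_right, h1, mul_one] at h2
  rw [hg, h2, one_smul]

lemma normalize_mem_ker {A : H →ₗ.[ℂ] H} (hA : Dense (A.domain : Set H)) {μ ψ : H} {z : ℂ}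
    (hψ : InKerShift A.adjoint z ψ) (h0 : ⟪μ, ψ⟫ ≠ 0) :
    InKerShift A.adjoint z ((⟪μ, ψ⟫)⁻¹ • ψ) ∧ ⟪μ, (⟪μ, ψ⟫)⁻¹ • ψ⟫ = 1 := by
  rw [inKerShift_adjoint_iff hA] at hψ ⊢
  exact ⟨fun x => by rw [inner_smul_left, hψ, mul_zero],
    by rw [inner_smul_right, inv_mul_cancel₀ h0]⟩

/-- Near `z₁` the normalised kernel vector is `(1 - (z - z₁) Q*)⁻¹ ξ₁`, including at real `z₁`
belonging to the spectrum of a given self-adjoint extension. -/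
lemma analyticAt_normalizedKer (S : KreinOp H) {μ : H} {z₁ : ℂ}
    (hG : GaugeSplit S.A μ (conj z₁)) : AnalyticAt ℂ (normalizedKer S.A μ) z₁ := by
  obtain ⟨v, hv0, hv⟩ := S.defOneOne z₁
  have hvk : InKerShift S.A.adjoint z₁ v := by
    change v ∈ {ψ : H | InKerShift S.A.adjoint z₁ ψ}
    rw [hv]
    exact ⟨1, (one_smul _ _).symm⟩
  have hvμ := inner_ne_zero_of_gaugeSplit hG ((inKerShift_adjoint_iff S.dense _ _).mp hvk) hv0
  obtain ⟨hξk, hξμ⟩ := normalize_mem_ker S.dense hvk hvμ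
  generalize (⟪μ, v⟫)⁻¹ • v = ξ at hξk hξμ
  have hξ := (inKerShift_adjoint_iff S.dense _ _).mp hξk
  have hξμ' : ⟪ξ, μ⟫ = 1 := by rw [← inner_conj_symm, hξμ, map_one]
  obtain ⟨Q, hQμ, hQ⟩ := exists_gaugeInverse S.regular hG hξ hξμ'
  let F : ℂ → (H →L[ℂ] H) := fun z => 1 - (z - z₁) • ContinuousLinearMap.adjoint Q
  have hF1 : F z₁ = ((1 : (H →L[ℂ] H)ˣ) : H →L[ℂ] H) := by simp [F]
  have hF : AnalyticAt ℂ F z₁ :=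
    analyticAt_const.sub ((analyticAt_id.sub analyticAt_const).smul analyticAt_const)
  have hinv : AnalyticAt ℂ (fun z => Ring.inverse (F z) ξ) z₁ := by
    have h := (hF1 ▸ analyticAt_inverse (𝕜 := ℂ) (1 : (H →L[ℂ] H)ˣ) :
      AnalyticAt ℂ Ring.inverse (F z₁))
    exact ((ContinuousLinearMap.apply ℂ H ξ).analyticAt _).comp (h.comp hF)
  refine hinv.congr ?_
  have hunit : ∀ᶠ z in nhds z₁, IsUnit (F z) :=
    hF.continuousAt.eventually (Units.isOpen.mem_nhds (hF1 ▸ Units.isUnit _))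
  filter_upwards [hunit] with z hz
  have hfix : F z (Ring.inverse (F z) ξ) = ξ := by
    change (F z * Ring.inverse (F z)) ξ = ξ
    rw [Ring.mul_inverse_cancel _ hz]
    rfl
  have hη : Ring.inverse (F z) ξ
      = (z - z₁) • ContinuousLinearMap.adjoint Q (Ring.inverse (F z) ξ) + ξ := by
    nth_rewrite 3 [← hfix]
    simp [F]
  obtain ⟨h1, h2⟩ := normalized_of_fixedPoint S.dense hQμ hQ hξ hξμ' hη
  exact (normalizedKer_eq S h1 h2).symm

/-- For two self-adjoint extensions of `A`, the corresponding `ψ`-functions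
are proportional at every common regular point; hence `ξ(z) = ψ(z̄)/⟪μ, ψ(z̄)⟫` does not
depend on the extension, and `z ↦ ξ(z̄)` extends analytically to `{z | z̄ ∉ S_μ}`. -/
theorem statement1 [TopologicalSpace.SeparableSpace H]
    (S : KreinOp H)
    (B B' : H →ₗ.[ℂ] H) (hB : IsSAExt S.A B) (hB' : IsSAExt S.A B')
    (res res' : Set ℂ) (R R' : ℂ → H →L[ℂ] H)
    (hR : IsResolventOn B res R) (hR' : IsResolventOn B' res' R')
    (hres : ∀ w : ℂ, w.im ≠ 0 → w ∈ res) (hres' : ∀ w : ℂ, w.im ≠ 0 → w ∈ res')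
    (z₀ : ℂ) (hz₀ : z₀ ∈ res) (hz₀' : z₀ ∈ res')
    (ψ₀ : H) (hψ₀ne : ψ₀ ≠ 0) (hψ₀ : InKerShift S.A.adjoint z₀ ψ₀)
    (μ : H) :
    (∀ z : ℂ, z ∈ res → z ∈ res' →
      ∃ g : ℂ, psiFun R' z₀ ψ₀ z = g • psiFun R z₀ ψ₀ z)
    ∧ (∀ z : ℂ, conj z ∈ res → conj z ∈ res' →
        ⟪μ, psiFun R z₀ ψ₀ (conj z)⟫ ≠ 0 → ⟪μ, psiFun R' z₀ ψ₀ (conj z)⟫ ≠ 0 →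
        xiFun μ R z₀ ψ₀ z = xiFun μ R' z₀ ψ₀ z)
    ∧ ∃ Ξ : ℂ → H, AnalyticOnNhd ℂ Ξ {z : ℂ | conj z ∉ Smu S.A μ} ∧
        ∀ z : ℂ, conj z ∉ Smu S.A μ → z ∈ res →
          Ξ z = xiFun μ R z₀ ψ₀ (conj z) := by
  have hk := fun {z : ℂ} (hz : z ∈ res) => psiFun_mem_ker S.dense hB hR hz hψ₀
  have hk' := fun {z : ℂ} (hz : z ∈ res') => psiFun_mem_ker S.dense hB' hR' hz hψ₀
  have hne := fun {z : ℂ} (hz : z ∈ res) => psiFun_ne_zero hR hz₀ hz hψ₀ne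
  have hprop : ∀ z : ℂ, z ∈ res → z ∈ res' →
      ∃ g : ℂ, psiFun R' z₀ ψ₀ z = g • psiFun R z₀ ψ₀ z := fun z hz hz' =>
    exists_eq_smul_of_ker S (hk hz) (hk' hz') (hne hz)
  refine ⟨hprop, fun z hz hz' _ h' => ?_, normalizedKer S.A μ, fun z hz => ?_, fun z hz hzr => ?_⟩
  · obtain ⟨g, hg⟩ := hprop _ hz hz'
    have hg0 : g ≠ 0 := by
      rintro rfl
      simp [hg] at h'
    rw [xiFun, xiFun, hg, normalize_smul _ _ hg0]
  · exact analyticAt_normalizedKer S (not_not.mp hz)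
  · have hμ := inner_ne_zero_of_gaugeSplit (not_not.mp hz)
      ((inKerShift_adjoint_iff S.dense _ _).mp (hk hzr)) (hne hzr)
    obtain ⟨h1, h2⟩ := normalize_mem_ker S.dense (hk hzr) hμ
    rw [xiFun, conj_conj, normalizedKer_eq S h1 h2]

end
end

section
/- (Necessity of reality.) Assume S_μ is invariant under complex conjugation of the variable, and assume that the map Ĉ, defined by (Ĉf)(z) := conj(f(z̄)), maps Ĥ_μ := {φ̂ : φ ∈ H} into itself and satisfies ‖Φ_μ⁻¹(Ĉ f)‖ = ‖Φ_μ⁻¹ f‖ for all f ∈ Ĥ_μ. Then C := Φ_μ⁻¹ ∘ Ĉ ∘ Φ_μ is a complex conjugation on H (bijective, antilinear, C² = I, ⟨Cη, Cφ⟩ = ⟨φ, η⟩), Cμ = μ, and A is real with respect to C: C dom(A) = dom(A) and CAφ = ACφ for every φ ∈ dom(A). -/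
/-!
Write `ψ z` for the defect vector spanning `Ker(A* - z·I)`. Off the real axis it is holomorphic
(Neumann series for the resolvent), `⟪ψ z̄, x⟫ = 0` characterizes `x ∈ ran(A - z·I)` (closed range
and deficiency indices), and simplicity makes `{ψ z}` total; these facts are collected in
`IsDefectField`.

Suppose `μ ≠ 0`. A nonreal `z` lies in `S_μ` iff `⟪ψ z̄, μ⟫ = 0`, and by the identity theorem and the
symmetry of `S_μ` the nonreal points outside `S_μ` are dense (`IsDefectField.mem_closure_ne_zero`).
Hence a vector is determined by its transform there, so the vectors `φ'` supplied by the hypothesis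
define a norm-preserving antilinear involution `C` fixing `μ`, a conjugation by polarization.
In the transform, `A` is the maximal operator of multiplication by `z`
(`IsDefectField.mem_domain`), which commutes with `f ↦ conj (f (conj ·))`; this is
`IsDefectField.real`.

If `μ = 0`, then `S_μ = ℂ` and the hypothesis is empty, but a suitable conjugation still exists:
since `⟪ψ z, ψ w⟫ = ⟪ψ w̄, ψ z̄⟫` by the resolvent identity, `ψ z ↦ ψ z̄` extends to an antilinear
isometry of `H` (`IsDefectField.exists_conjugation`), and the same multiplication argument applies.
-/

open scoped ComplexConjugate
open Complex

noncomputable section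

variable {H : Type*} [NormedAddCommGroup H] [InnerProductSpace ℂ H] [CompleteSpace H]

local notation "⟪" x ", " y "⟫" => @inner ℂ _ _ x y

/-- A complex conjugation on `H`: a bijective antilinear map `C` with `C² = I` and
`⟪Cη, Cφ⟫ = ⟪φ, η⟫`. -/
structure IsConjugation (C : H → H) : Prop where
  add : ∀ u v : H, C (u + v) = C u + C v
  smul : ∀ (a : ℂ) (v : H), C (a • v) = conj a • C v
  invol : ∀ v : H, C (C v) = v
  inner_eq : ∀ u v : H, ⟪C u, C v⟫ = ⟪v, u⟫

/-! ### The resolvent of the self-adjoint extension -/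

/-- Operator form of the first resolvent identity, avoiding the unbounded operator. -/
theorem resolvent_identity {B : H →ₗ.[ℂ] H} {res : Set ℂ} {R : ℂ → H →L[ℂ] H}
    (hR : IsResolventOn B res R) {z w : ℂ} (hz : z ∈ res) (hw : w ∈ res) (v : H) :
    R z v - R w v = (z - w) • R z (R w v) := by
  obtain ⟨h, hBw⟩ := (hR w hw).1 v
  have h1 := (hR z hz).2 ⟨R w v, h⟩
  have h2 : B ⟨R w v, h⟩ = v + w • R w v := sub_eq_iff_eq_add.1 hBw
  rw [h2] at h1
  simp only [map_add, map_sub, map_smul] at h1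
  have : R w v = R z v + w • R z (R w v) - z • R z (R w v) := h1.symm
  nth_rewrite 1 [this]
  module

theorem resolvent_comm {B : H →ₗ.[ℂ] H} {res : Set ℂ} {R : ℂ → H →L[ℂ] H}
    (hR : IsResolventOn B res R) {z w : ℂ} (hz : z ∈ res) (hw : w ∈ res) (v : H) :
    R z (R w v) = R w (R z v) := by
  rcases eq_or_ne z w with rfl | hne
  · rfl
  have h1 := resolvent_identity hR hz hw v
  have h2 := resolvent_identity hR hw hz v
  have h3 : (z - w) • (R z (R w v) - R w (R z v)) = 0 := by
    have : (z - w) • R w (R z v) = R z v - R w v := by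
      rw [← neg_sub w z, neg_smul, ← h2]; abel
    rw [smul_sub, ← h1, this, sub_self]
  rcases smul_eq_zero.1 h3 with h | h
  · exact absurd (sub_eq_zero.1 h) hne
  · exact sub_eq_zero.1 h

theorem resolvent_adjoint {B : H →ₗ.[ℂ] H} (hB : IsSelfAdjoint B) {res : Set ℂ}
    {R : ℂ → H →L[ℂ] H} (hR : IsResolventOn B res R) {z : ℂ} (hz : z ∈ res)
    (hz' : conj z ∈ res) (u v : H) : ⟪R z u, v⟫ = ⟪u, R (conj z) v⟫ := by
  have hsymm : ∀ x y : B.domain, ⟪B x, (y : H)⟫ = ⟪(x : H), B y⟫ := by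
    have := LinearPMap.adjoint_isFormalAdjoint (T := B) hB.dense_domain
    rw [LinearPMap.isSelfAdjoint_def.1 hB] at this
    exact fun x y => this x y
  obtain ⟨h, hu⟩ := (hR z hz).1 u
  obtain ⟨h', hv⟩ := (hR _ hz').1 v
  have := hsymm ⟨R z u, h⟩ ⟨R (conj z) v, h'⟩
  conv_lhs => rw [← hv]
  conv_rhs => rw [← hu]
  rw [inner_sub_left, inner_sub_right, inner_smul_left, inner_smul_right, this]

theorem resolvent_differentiableAt {B : H →ₗ.[ℂ] H} {res : Set ℂ} {R : ℂ → H →L[ℂ] H}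
    (hR : IsResolventOn B res R) (hres : ∀ w : ℂ, w.im ≠ 0 → w ∈ res) {w : ℂ} (hw : w.im ≠ 0) :
    DifferentiableAt ℂ R w := by
  set F : ℂ → H →L[ℂ] H := fun z => 1 + (w - z) • R w with hF
  have hFd : Differentiable ℂ F := by
    intro z; fun_prop
  have hFw : F w = 1 := by simp [hF]
  have hunit : ∀ᶠ z in nhds w, IsUnit (F z) :=
    hFd.continuous.continuousAt.eventually
      (Units.isOpen.mem_nhds (show IsUnit (F w) by rw [hFw]; exact isUnit_one))
  have him : ∀ᶠ z : ℂ in nhds w, z.im ≠ 0 :=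
    Complex.continuous_im.continuousAt.eventually_ne hw
  have heq : R =ᶠ[nhds w] fun z => R w * Ring.inverse (F z) := by
    filter_upwards [hunit, him] with z hz1 hz2
    have key : R z * F z = R w := by
      ext v
      have h1 := resolvent_identity hR (hres z hz2) (hres w hw) v
      have : R z (F z v) = R z v + (w - z) • R z (R w v) := by simp [hF]
      change R z (F z v) = R w v
      rw [this, ← neg_sub z w, neg_smul, ← h1]; abel
    rw [← key, mul_assoc, Ring.mul_inverse_cancel _ hz1, mul_one]
  refine DifferentiableAt.congr_of_eventuallyEq ?_ heq
  have h2 : DifferentiableAt ℂ (fun z => Ring.inverse (F z)) w :=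
    DifferentiableAt.comp w (g := Ring.inverse)
      (differentiableAt_inverse (by rw [hFw]; exact isUnit_one)) (hFd w)
  exact (differentiableAt_const _).mul h2

/-! ### The field of defect vectors -/

/-- The properties of `z ↦ ψ(z)` on `ℂ ∖ ℝ` that the argument uses: `ψ` is a holomorphic
choice of spanning vectors of `Ker(A* - z·I)`, total in `H`, whose Gram kernel is invariant
under `(z, w) ↦ (w̄, z̄)`. -/
structure IsDefectField (A : H →ₗ.[ℂ] H) (ψ : ℂ → H) : Prop where
  adj : ∀ z : ℂ, z.im ≠ 0 → ∀ φ : A.domain, ⟪ψ z, A φ⟫ = conj z * ⟪ψ z, (φ : H)⟫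
  mem_ran : ∀ z : ℂ, z.im ≠ 0 → ∀ x : H, ⟪ψ (conj z), x⟫ = 0 → x ∈ ranShift A z
  diff : ∀ z : ℂ, z.im ≠ 0 → DifferentiableAt ℂ ψ z
  inner_conj : ∀ z w : ℂ, z.im ≠ 0 → w.im ≠ 0 →
    ⟪ψ z, ψ w⟫ = ⟪ψ (conj w), ψ (conj z)⟫
  total : ∀ x : H, (∀ z : ℂ, z.im ≠ 0 → ⟪ψ z, x⟫ = 0) → x = 0

/-- Regularity and closedness make the range of `A - z·I` closed. -/
theorem isClosed_ranShift (S : KreinOp H) (z : ℂ) : IsClosed (ranShift S.A z) := by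
  obtain ⟨c, hc, hbound⟩ := S.regular z
  refine IsSeqClosed.isClosed fun x p hx hp => ?_
  choose φ hφ using hx
  have hφ' : ∀ n, S.A (φ n) - z • (φ n : H) = x n := hφ
  have hcau : CauchySeq fun n => (φ n : H) := by
    have hxc := hp.cauchySeq
    rw [Metric.cauchySeq_iff] at hxc ⊢
    intro ε hε
    obtain ⟨N, hN⟩ := hxc (c * ε) (by positivity)
    refine ⟨N, fun m hm n hn => ?_⟩
    have h1 := hN m hm n hn
    have h2 := hbound (φ m - φ n)
    have h3 : S.A (φ m - φ n) - z • ((φ m - φ n : S.A.domain) : H) = x m - x n := by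
      rw [← hφ' m, ← hφ' n, LinearPMap.map_sub, Submodule.coe_sub, smul_sub]; abel
    rw [h3, ← dist_eq_norm, Submodule.coe_sub, ← dist_eq_norm] at h2
    exact lt_of_mul_lt_mul_left (h2.trans_lt h1) hc.le
  obtain ⟨f, hf⟩ := cauchySeq_tendsto_of_complete hcau
  have hA : Filter.Tendsto (fun n => S.A (φ n)) Filter.atTop (nhds (p + z • f)) := by
    have : (fun n => S.A (φ n)) = fun n => x n + z • (φ n : H) := by
      funext n; rw [← hφ' n]; abel
    rw [this]
    exact hp.add (hf.const_smul z)
  have hmem : (f, p + z • f) ∈ S.A.graph := by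
    have hcl : IsClosed (S.A.graph : Set (H × H)) := S.closed
    exact hcl.mem_of_tendsto (hf.prodMk_nhds hA)
      (Filter.Eventually.of_forall fun n => LinearPMap.mem_graph _ (φ n))
  obtain ⟨y, hy1, hy2⟩ := (LinearPMap.mem_graph_iff _).1 hmem
  refine ⟨y, ?_⟩
  simp only at hy1 hy2
  change S.A y - z • (y : H) = p
  rw [hy2, hy1]; abel

theorem mem_ranShift_of_inner (S : KreinOp H) {z : ℂ} {ψ : H} (hψ : ψ ≠ 0)
    (hadj : ∀ φ : S.A.domain, ⟪ψ, S.A φ⟫ = z * ⟪ψ, (φ : H)⟫) {x : H} (hx : ⟪ψ, x⟫ = 0) :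
    x ∈ ranShift S.A z := by
  set L : Submodule ℂ H := LinearMap.range (S.A.toFun - z • S.A.domain.subtype) with hL
  have hLr : (L : Set H) = ranShift S.A z := by
    ext y; simp [hL, ranShift, LinearMap.mem_range]
  have hcl : IsClosed (L : Set H) := by rw [hLr]; exact isClosed_ranShift S z
  have hker : ∀ y : H, (∀ φ : S.A.domain, ⟪y, S.A φ⟫ = z * ⟪y, (φ : H)⟫) →
      InKerShift S.A.adjoint (conj z) y := by
    intro y hy
    have hy' : ∀ φ : S.A.domain, ⟪conj z • y, (φ : H)⟫ = ⟪y, S.A φ⟫ := fun φ => by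
      rw [hy φ, inner_smul_left, Complex.conj_conj]
    have hd := LinearPMap.mem_adjoint_domain_of_exists (T := S.A) y ⟨conj z • y, hy'⟩
    exact ⟨hd, LinearPMap.adjoint_apply_eq S.dense ⟨y, hd⟩ hy'⟩
  obtain ⟨v, hv0, hv⟩ := S.defOneOne (conj z)
  obtain ⟨a, ha⟩ : ∃ a : ℂ, ψ = a • v := by
    have : ψ ∈ {ψ : H | InKerShift S.A.adjoint (conj z) ψ} := hker ψ hadj
    rwa [hv] at this
  have ha0 : a ≠ 0 := by rintro rfl; exact hψ (by simp [ha])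
  have hvx : ⟪v, x⟫ = 0 := by
    rw [ha, inner_smul_left] at hx
    exact (mul_eq_zero.1 hx).resolve_left (by simpa using ha0)
  have hx2 : x ∈ Lᗮᗮ := by
    rw [Submodule.mem_orthogonal]
    intro y hy
    have : y ∈ {ψ : H | InKerShift S.A.adjoint (conj z) ψ} := by
      refine hker y fun φ => ?_
      have h := Submodule.inner_left_of_mem_orthogonal
        (show S.A φ - z • (φ : H) ∈ L from ⟨φ, rfl⟩) hy
      rw [inner_sub_right, inner_smul_right] at h
      exact sub_eq_zero.1 h
    rw [hv] at this
    obtain ⟨b, rfl⟩ := this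
    rw [inner_smul_left, hvx, mul_zero]
  rw [Submodule.orthogonal_orthogonal_eq_closure, hcl.submodule_topologicalClosure_eq] at hx2
  rw [← hLr]; exact hx2

theorem isDefectField_psiFun (S : KreinOp H) {B : H →ₗ.[ℂ] H} (hB : IsSAExt S.A B)
    {res : Set ℂ} {R : ℂ → H →L[ℂ] H} (hR : IsResolventOn B res R)
    (hres : ∀ w : ℂ, w.im ≠ 0 → w ∈ res)
    {z₀ : ℂ} (hz₀ : z₀ ∈ res) {ψ₀ : H} (hψ₀ne : ψ₀ ≠ 0)
    (hψ₀ : InKerShift S.A.adjoint z₀ ψ₀) : IsDefectField S.A (psiFun R z₀ ψ₀) := by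
  have him : ∀ z : ℂ, z.im ≠ 0 → (conj z).im ≠ 0 := fun z hz => by simpa using hz
  have hadj0 : ∀ φ : S.A.domain, ⟪ψ₀, S.A φ⟫ = conj z₀ * ⟪ψ₀, (φ : H)⟫ := by
    intro φ
    obtain ⟨hd, he⟩ := hψ₀
    have := LinearPMap.adjoint_isFormalAdjoint (T := S.A) S.dense ⟨ψ₀, hd⟩ φ
    rw [he, inner_smul_left] at this
    exact this.symm
  have hadj : ∀ z : ℂ, z.im ≠ 0 → ∀ φ : S.A.domain,
      ⟪psiFun R z₀ ψ₀ z, S.A φ⟫ = conj z * ⟪psiFun R z₀ ψ₀ z, (φ : H)⟫ := by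
    intro z hz φ
    have hBφ : B ⟨φ, hB.1.1 φ.2⟩ = S.A φ := (hB.1.2 (x := φ) (y := ⟨φ, hB.1.1 φ.2⟩) rfl).symm
    have h1 := (hR _ (hres _ (him z hz))).2 ⟨φ, hB.1.1 φ.2⟩
    rw [hBφ] at h1
    have h2 : ⟪R z ψ₀, S.A φ - conj z • (φ : H)⟫ = ⟪ψ₀, (φ : H)⟫ := by
      rw [resolvent_adjoint hB.2 hR (hres z hz) (hres _ (him z hz)), h1]
    rw [inner_sub_right, inner_smul_right] at h2
    simp only [psiFun, inner_add_left, inner_smul_left, map_sub]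
    rw [hadj0 φ]
    linear_combination (conj z - conj z₀) * h2
  have hne : ∀ z : ℂ, z.im ≠ 0 → psiFun R z₀ ψ₀ z ≠ 0 := by
    intro z hz h0
    obtain ⟨hm, he⟩ := (hR z (hres z hz)).1 ψ₀
    have hψe : ψ₀ = (z₀ - z) • R z ψ₀ := by
      have h0' : ψ₀ + (z - z₀) • R z ψ₀ = 0 := h0
      rw [eq_neg_of_add_eq_zero_left h0', ← neg_smul, neg_sub]
      congr 2
      rw [← neg_sub z z₀, neg_smul, ← eq_neg_of_add_eq_zero_left h0']
    have hd : B ((z₀ - z) • (⟨R z ψ₀, hm⟩ : B.domain)) - z₀ • ((z₀ - z) • R z ψ₀) = 0 := by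
      rw [LinearPMap.map_smul, (sub_eq_iff_eq_add.1 he), smul_add]
      nth_rewrite 1 [hψe]
      module
    have h3 := (hR z₀ hz₀).2 ((z₀ - z) • (⟨R z ψ₀, hm⟩ : B.domain))
    have h4 : (((z₀ - z) • (⟨R z ψ₀, hm⟩ : B.domain) : B.domain) : H) = (z₀ - z) • R z ψ₀ := rfl
    rw [h4, hd, map_zero, ← hψe] at h3
    exact hψ₀ne h3.symm
  have hran : ∀ z : ℂ, z.im ≠ 0 → ∀ x : H, ⟪psiFun R z₀ ψ₀ (conj z), x⟫ = 0 →
      x ∈ ranShift S.A z := by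
    intro z hz x hx
    refine mem_ranShift_of_inner S (hne _ (him z hz)) (fun φ => ?_) hx
    rw [hadj _ (him z hz), Complex.conj_conj]
  refine ⟨hadj, hran, ?_, ?_, ?_⟩
  · intro z hz
    have := resolvent_differentiableAt hR hres hz
    unfold psiFun
    fun_prop
  · intro z w hz hw
    have hz' := hres _ (him z hz)
    have hw' := hres _ (him w hw)
    have hz1 := hres _ hz
    have hw1 := hres _ hw
    have e1 := resolvent_identity hR hz' hw1 ψ₀
    have e2 := resolvent_comm hR hz' hw1 ψ₀
    have e1' := congrArg (fun t => ⟪ψ₀, t⟫) e1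
    simp only [inner_sub_right, inner_smul_right] at e1'
    have a1 : ∀ v, ⟪R z ψ₀, v⟫ = ⟪ψ₀, R (conj z) v⟫ := resolvent_adjoint hB.2 hR hz1 hz' _
    have a2 : ∀ v, ⟪R (conj w) ψ₀, v⟫ = ⟪ψ₀, R w v⟫ := fun v => by
      have := resolvent_adjoint hB.2 hR hw' (by rwa [Complex.conj_conj]) ψ₀ v
      rwa [Complex.conj_conj] at this
    simp only [psiFun, inner_add_left, inner_add_right, inner_smul_left, inner_smul_right, map_sub,
      Complex.conj_conj, a1, a2, ← e2]
    linear_combination (z₀ - conj z₀) * e1'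
  · intro x hx
    have : x ∈ (⋂ z ∈ {w : ℂ | w.im ≠ 0}, ranShift S.A z) := by
      simp only [Set.mem_iInter]
      exact fun z hz => hran z hz x (hx _ (him z hz))
    rw [S.simple] at this
    exact this

/-! ### Continuation from a dense set of nonreal points -/

/-- A function continuous off the real axis that vanishes on a set accumulating at every nonreal
point vanishes off the real axis. -/
theorem eq_zero_of_dense {D : Set ℂ} (hD : ∀ w : ℂ, w.im ≠ 0 → w ∈ closure D) {g : ℂ → ℂ}
    (hg : ∀ w : ℂ, w.im ≠ 0 → ContinuousAt g w) (h0 : ∀ w ∈ D, g w = 0) (w : ℂ) (hw : w.im ≠ 0) :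
    g w = 0 := by
  by_contra hne
  obtain ⟨y, hy, hyD⟩ := ((mem_closure_iff_frequently.1 (hD w hw)).and_eventually
    ((hg w hw).eventually_ne hne)).exists
  exact hyD (h0 y hy)

theorem mem_closure_nonreal_ne (z : ℂ) (w : ℂ) (hw : w.im ≠ 0) :
    w ∈ closure {y : ℂ | y.im ≠ 0 ∧ y ≠ z} := by
  rw [mem_closure_iff_frequently]
  have h1 : ∀ᶠ y : ℂ in nhds w, y.im ≠ 0 := Complex.continuous_im.continuousAt.eventually_ne hw
  have h2 : ∃ᶠ y : ℂ in nhds w, y ≠ z :=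
    mem_closure_iff_frequently.1 ((dense_compl_singleton z) w)
  exact (h2.and_eventually h1).mono fun y hy => ⟨hy.2, hy.1⟩

theorem IsDefectField.continuousAt_inner {A : H →ₗ.[ℂ] H} {ψ : ℂ → H} (hψ : IsDefectField A ψ)
    (x : H) {w : ℂ} (hw : w.im ≠ 0) : ContinuousAt (fun z => ⟪ψ z, x⟫) w :=
  (hψ.diff w hw).continuousAt.inner continuousAt_const

theorem IsDefectField.eq_zero_of_dense {A : H →ₗ.[ℂ] H} {ψ : ℂ → H} (hψ : IsDefectField A ψ)
    {D : Set ℂ} (hD : ∀ w : ℂ, w.im ≠ 0 → w ∈ closure D) {x : H}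
    (h0 : ∀ w ∈ D, ⟪ψ w, x⟫ = 0) : x = 0 :=
  hψ.total x (_root_.eq_zero_of_dense hD (fun _ hw => hψ.continuousAt_inner x hw) h0)

/-- If `⟪ψ z, μ⟫` vanishes at `z` exactly when it does at `z̄`, and `μ ≠ 0`, then the nonreal points
where it does not vanish accumulate at every nonreal point. Vanishing near a point forces vanishing
on its half-plane, and the symmetry carries this over to the other half-plane. -/
theorem IsDefectField.mem_closure_ne_zero {A : H →ₗ.[ℂ] H} {ψ : ℂ → H} (hψ : IsDefectField A ψ)
    {μ : H} (hμ : μ ≠ 0)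
    (hconj : ∀ z : ℂ, z.im ≠ 0 → ⟪ψ z, μ⟫ = 0 → ⟪ψ (conj z), μ⟫ = 0) (w : ℂ) (hw : w.im ≠ 0) :
    w ∈ closure {z : ℂ | z.im ≠ 0 ∧ ⟪ψ z, μ⟫ ≠ 0} := by
  by_contra hcl
  set f : ℂ → ℂ := fun z => ⟪μ, ψ z⟫ with hf
  have hff : ∀ z, f z = 0 ↔ ⟪ψ z, μ⟫ = 0 := fun z => inner_eq_zero_symm
  have hfd : ∀ z : ℂ, z.im ≠ 0 → DifferentiableAt ℂ f z := fun z hz =>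
    ((innerSL ℂ μ).differentiableAt).comp z (hψ.diff z hz)
  have hev : f =ᶠ[nhds w] 0 := by
    rw [mem_closure_iff_frequently, Filter.not_frequently] at hcl
    filter_upwards [hcl, Complex.continuous_im.continuousAt.eventually_ne hw] with z hz hz'
    by_contra hne
    exact hz ⟨hz', fun h => hne ((hff z).2 h)⟩
  have hhalf : ∀ U : Set ℂ, IsOpen U → Convex ℝ U → (∀ z ∈ U, z.im ≠ 0) → w ∈ U →
      ∀ z ∈ U, f z = 0 := by
    intro U hU hUc hUim hwU z hz
    have han : AnalyticOnNhd ℂ f U :=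
      DifferentiableOn.analyticOnNhd
        (fun y hy => (hfd y (hUim y hy)).differentiableWithinAt) hU
    exact han.eqOn_zero_of_preconnected_of_eventuallyEq_zero hUc.isPreconnected hwU hev hz
  have hside : ∀ z : ℂ, 0 < z.im * w.im → f z = 0 := by
    intro z hz
    rcases lt_or_gt_of_ne hw with h | h
    · exact hhalf {y | y.im < 0} (isOpen_lt Complex.continuous_im continuous_const)
        (convex_halfSpace_im_lt 0) (fun y hy => ne_of_lt hy) h z
        (neg_of_mul_pos_left hz h.le)
    · exact hhalf {y | 0 < y.im} (isOpen_lt continuous_const Complex.continuous_im)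
        (convex_halfSpace_im_gt 0) (fun y hy => ne_of_gt hy) h z
        (pos_of_mul_pos_left hz h.le)
  refine hμ (hψ.total μ fun z hz => ?_)
  rcases lt_or_gt_of_ne (mul_ne_zero hz hw) with h | h
  · have h1 := (hff _).1 (hside (conj z) (by simpa using h))
    simpa using hconj (conj z) (by simpa using hz) h1
  · exact (hff z).1 (hside z h)

/-! ### Reality of the operator -/

/-- In the functional model `A` is the maximal operator of multiplication by the variable: if
`v̂(w) = w · û(w)` for enough nonreal `w`, then `u ∈ dom A` and `A u = v`. -/
theorem IsDefectField.mem_domain {A : H →ₗ.[ℂ] H} {ψ : ℂ → H} (hψ : IsDefectField A ψ)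
    {D : Set ℂ} (hD : ∀ w : ℂ, w.im ≠ 0 → w ∈ closure D) {u v : H}
    (h : ∀ w ∈ D, ⟪ψ w, v⟫ = conj w * ⟪ψ w, u⟫) : ∃ hu : u ∈ A.domain, A ⟨u, hu⟩ = v := by
  have hall : ∀ w : ℂ, w.im ≠ 0 → ⟪ψ w, v⟫ = conj w * ⟪ψ w, u⟫ := by
    intro w hw
    refine sub_eq_zero.1 (_root_.eq_zero_of_dense hD (g := fun w => ⟪ψ w, v⟫ - conj w * ⟪ψ w, u⟫)
      (fun y hy => ?_) (fun y hy => sub_eq_zero.2 (h y hy)) w hw)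
    exact (hψ.continuousAt_inner v hy).sub
      (Complex.continuous_conj.continuousAt.mul (hψ.continuousAt_inner u hy))
  have hI : (I : ℂ).im ≠ 0 := by simp
  -- `v - i u` lies in `ran(A - i)`; the preimage `f` turns out to be `u`.
  obtain ⟨f, hf⟩ := hψ.mem_ran I hI (v - I • u) (by
    rw [inner_sub_right, inner_smul_right, hall _ (by simp), Complex.conj_conj, sub_self])
  have hf' : A f - I • (f : H) = v - I • u := hf
  have hfu : (f : H) - u = 0 := by
    refine hψ.eq_zero_of_dense (mem_closure_nonreal_ne (conj I)) fun w hw => ?_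
    have h1 := congrArg (fun t => ⟪ψ w, t⟫) hf'
    simp only [inner_sub_right, inner_smul_right, hψ.adj w hw.1, hall w hw.1] at h1
    have h2 : (conj w - I) * (⟪ψ w, (f : H)⟫ - ⟪ψ w, u⟫) = 0 := by linear_combination h1
    rw [inner_sub_right]
    refine (mul_eq_zero.1 h2).resolve_left fun h3 => hw.2 ?_
    rw [← sub_eq_zero.1 h3, Complex.conj_conj]
  rw [sub_eq_zero] at hfu
  subst hfu
  have hAf : A f = v := sub_left_injective hf'
  exact ⟨f.2, hAf⟩

/-- A map intertwining, up to a scalar factor, the transform with `f ↦ conj (f (conj ·))`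
commutes with `A`. -/
theorem IsDefectField.real {A : H →ₗ.[ℂ] H} {ψ : ℂ → H} (hψ : IsDefectField A ψ)
    {D : Set ℂ} (hD : ∀ w : ℂ, w.im ≠ 0 → w ∈ closure D) (hDim : ∀ w ∈ D, w.im ≠ 0)
    {C : H → H} {a : ℂ → ℂ}
    (hC : ∀ w ∈ D, ∀ x : H, ⟪ψ w, C x⟫ = a w * conj ⟪ψ (conj w), x⟫) (φ : A.domain) :
    ∃ h : C (φ : H) ∈ A.domain, A ⟨C (φ : H), h⟩ = C (A φ) := by
  refine hψ.mem_domain hD fun w hw => ?_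
  rw [hC w hw, hC w hw, hψ.adj (conj w) (by simpa using hDim w hw)]
  simp only [map_mul, Complex.conj_conj]
  ring

/-! ### Conjugations -/

/-- Polarization: a norm-preserving antilinear involution is a conjugation. -/
theorem isConjugation_of_norm {C : H → H} (hadd : ∀ u v : H, C (u + v) = C u + C v)
    (hsmul : ∀ (a : ℂ) (v : H), C (a • v) = conj a • C v) (hinv : ∀ v : H, C (C v) = v)
    (hnorm : ∀ v : H, ‖C v‖ = ‖v‖) : IsConjugation C := by
  refine ⟨hadd, hsmul, hinv, fun u v => ?_⟩
  have hsub : ∀ u v : H, C (u - v) = C u - C v := fun u v => by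
    rw [sub_eq_add_neg, hadd, ← neg_one_smul ℂ v, hsmul]; simp [sub_eq_add_neg]
  have h3 : C u - I • C v = C (u + I • v) := by rw [hadd, hsmul]; simp [sub_eq_add_neg]
  have h4 : C u + I • C v = C (u - I • v) := by rw [hsub, hsmul]; simp
  rw [← inner_conj_symm v u, inner_eq_sum_norm_sq_div_four (C u) (C v),
    inner_eq_sum_norm_sq_div_four u v]
  simp only [RCLike.I_to_complex, h3, h4, ← hadd, ← hsub, hnorm]
  simp [Complex.conj_ofNat]
  ring

/-- Any defect field carries a conjugation exchanging `ψ z` and `ψ z̄`: the symmetry of the Gram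
kernel makes the antilinear extension of `ψ z ↦ ψ z̄` isometric on the dense linear span. -/
theorem IsDefectField.exists_conjugation {A : H →ₗ.[ℂ] H} {ψ : ℂ → H} (hψ : IsDefectField A ψ) :
    ∃ C : H → H, IsConjugation C ∧ ∀ z : ℂ, z.im ≠ 0 → C (ψ z) = ψ (conj z) := by
  let N := {z : ℂ // z.im ≠ 0}
  let e : (N →₀ ℂ) →ₗ[ℂ] H := Finsupp.linearCombination ℂ fun z : N => ψ z
  let f : (N →₀ ℂ) →ₛₗ[starRingEnd ℂ] H :=
    { toFun := fun c => c.sum fun z a => conj a • ψ (conj (z : ℂ))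
      map_add' := fun c d => by
        refine Finsupp.sum_add_index' (by simp) fun z a b => ?_
        rw [map_add, add_smul]
      map_smul' := fun r c => by
        rw [Finsupp.sum_smul_index (by simp), Finsupp.smul_sum]
        simp [mul_smul] }
  have hf : ∀ c, f c = c.sum fun z a => conj a • ψ (conj (z : ℂ)) := fun c => rfl
  have he : ∀ c, e c = c.sum fun z a => a • ψ (z : ℂ) := fun c =>
    Finsupp.linearCombination_apply ℂ c
  have hinner : ∀ c, ⟪f c, f c⟫ = ⟪e c, e c⟫ := by
    intro c
    rw [hf, he]
    simp only [Finsupp.sum, inner_sum, sum_inner, inner_smul_left, inner_smul_right,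
      Complex.conj_conj, Finset.mul_sum]
    rw [Finset.sum_comm]
    refine Finset.sum_congr rfl fun z _ => Finset.sum_congr rfl fun w _ => ?_
    rw [hψ.inner_conj (w : ℂ) (z : ℂ) w.2 z.2]
    ring
  have hnorm : ∀ c, ‖f c‖ ≤ 1 * ‖e c‖ := by
    intro c
    have h := hinner c
    rw [inner_self_eq_norm_sq_to_K, inner_self_eq_norm_sq_to_K] at h
    have h' : ‖f c‖ ^ 2 = ‖e c‖ ^ 2 := by exact_mod_cast h
    rw [one_mul]
    exact (pow_le_pow_iff_left₀ (norm_nonneg _) (norm_nonneg _) two_ne_zero).1 h'.le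
  have hdense : DenseRange e := by
    have h1 : (LinearMap.range e)ᗮ = ⊥ := by
      rw [Submodule.eq_bot_iff]
      intro x hx
      refine hψ.total x fun z hz => ?_
      refine (Submodule.mem_orthogonal _ _).1 hx _ ⟨Finsupp.single ⟨z, hz⟩ 1, ?_⟩
      simp [e]
    have h2 := (Submodule.topologicalClosure_eq_top_iff).2 h1
    have h3 := Submodule.dense_iff_topologicalClosure_eq_top.2 h2
    exact h3
  let C := f.extendOfNorm e
  have hCe : ∀ c, C (e c) = f c := fun c => LinearMap.extendOfNorm_eq hdense ⟨1, hnorm⟩ c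
  have hCψ : ∀ z : ℂ, z.im ≠ 0 → C (ψ z) = ψ (conj z) := by
    intro z hz
    have := hCe (Finsupp.single ⟨z, hz⟩ 1)
    simpa [hf, he] using this
  have hCle : ∀ x, ‖C x‖ ≤ ‖x‖ := fun x => by
    simpa using LinearMap.norm_extendOfNorm_apply_le hdense 1 hnorm x
  have hCC : ∀ x, C (C x) = x := by
    refine hdense.induction ?_ (isClosed_eq (by fun_prop) continuous_id)
    rintro _ ⟨c, rfl⟩
    rw [hCe, hf, he, Finsupp.sum, Finsupp.sum, map_sum]
    refine Finset.sum_congr rfl fun z _ => ?_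
    rw [map_smulₛₗ, Complex.conj_conj, hCψ _ (by simpa using z.2), Complex.conj_conj]
  refine ⟨C, isConjugation_of_norm (map_add C) (fun a v => map_smulₛₗ C a v) hCC fun v => ?_, hCψ⟩
  refine le_antisymm (hCle v) ?_
  have := hCle (C v)
  rwa [hCC] at this

/-! ### Gauges -/

theorem inner_eq_zero_of_mem_ranShift {A : H →ₗ.[ℂ] H} {ψ : ℂ → H} (hψ : IsDefectField A ψ)
    {z : ℂ} (hz : z.im ≠ 0) {x : H} (hx : x ∈ ranShift A z) : ⟪ψ (conj z), x⟫ = 0 := by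
  obtain ⟨f, rfl⟩ := hx
  change ⟪ψ (conj z), A f - z • (f : H)⟫ = 0
  rw [inner_sub_right, inner_smul_right, hψ.adj _ (by simpa using hz), Complex.conj_conj, sub_self]

theorem IsDefectField.mem_Smu_iff {A : H →ₗ.[ℂ] H} {ψ : ℂ → H} (hψ : IsDefectField A ψ)
    (μ : H) {z : ℂ} (hz : z.im ≠ 0) : z ∈ Smu A μ ↔ ⟪ψ (conj z), μ⟫ = 0 := by
  have key : ∀ x : H, x ∈ ranShift A z ↔ ⟪ψ (conj z), x⟫ = 0 := fun x =>
    ⟨inner_eq_zero_of_mem_ranShift hψ hz, hψ.mem_ran z hz x⟩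
  constructor
  · intro h
    by_contra hne
    refine h fun v => ⟨⟪ψ (conj z), v⟫ / ⟪ψ (conj z), μ⟫, ?_, fun c hc => ?_⟩
    · change _ ∈ _
      rw [key, inner_sub_right, inner_smul_right, div_mul_cancel₀ _ hne, sub_self]
    · have hc' : v - c • μ ∈ ranShift A z := hc
      rw [key, inner_sub_right, inner_smul_right] at hc'
      rw [eq_div_iff hne]
      exact (sub_eq_zero.1 hc').symm
  · intro h hsplit
    have hmem : ∀ c : ℂ, (0 : H) - c • μ ∈ ranShift A z := fun c => by
      rw [key, inner_sub_right, inner_smul_right, h]; simp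
    exact zero_ne_one ((hsplit 0).unique (hmem 0) (hmem 1))

/-! ### Necessity of reality -/

/-- **Necessity of reality.** Assume `S_μ` is invariant under conjugation of
the variable and that `Ĉ : f ↦ (z ↦ conj (f z̄))` maps `Ĥ_μ = {φ̂ : φ ∈ H}` into itself,
preserving the norm `‖Φ_μ⁻¹ · ‖`. Then `C := Φ_μ⁻¹ ∘ Ĉ ∘ Φ_μ` is a complex conjugation on
`H` with `Cμ = μ`, and `A` is real with respect to `C`: `C dom(A) = dom(A)` and
`CAφ = ACφ` on `dom(A)`. -/
theorem statement18 [TopologicalSpace.SeparableSpace H]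
    (S : KreinOp H)
    (B : H →ₗ.[ℂ] H) (hB : IsSAExt S.A B)
    (res : Set ℂ) (R : ℂ → H →L[ℂ] H) (hR : IsResolventOn B res R)
    (hres : ∀ w : ℂ, w.im ≠ 0 → w ∈ res) (hresconj : ∀ w ∈ res, conj w ∈ res)
    (z₀ : ℂ) (hz₀ : z₀ ∈ res)
    (ψ₀ : H) (hψ₀ne : ψ₀ ≠ 0) (hψ₀ : InKerShift S.A.adjoint z₀ ψ₀)
    (μ : H)
    (hSmuconj : ∀ z : ℂ, z ∈ Smu S.A μ ↔ conj z ∈ Smu S.A μ)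
    (hChat : ∀ φ : H, ∃ φ' : H, ‖φ'‖ = ‖φ‖ ∧
      ∀ z : ℂ, z ∉ Smu S.A μ → z ∈ res →
        ⟪xiFun μ R z₀ ψ₀ z, φ'⟫ = conj (⟪xiFun μ R z₀ ψ₀ (conj z), φ⟫)) :
    ∃ C : H → H,
      IsConjugation C
      ∧ Function.Bijective C
      ∧ C μ = μ
      ∧ (∀ (φ : H) (z : ℂ), z ∉ Smu S.A μ → z ∈ res →
          ⟪xiFun μ R z₀ ψ₀ z, C φ⟫ = conj (⟪xiFun μ R z₀ ψ₀ (conj z), φ⟫))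
      ∧ (∀ φ : S.A.domain, ∃ h : C (φ : H) ∈ S.A.domain,
          S.A ⟨C (φ : H), h⟩ = C (S.A φ))
      ∧ ∀ v ∈ S.A.domain, C v ∈ S.A.domain ∧ ∃ u ∈ S.A.domain, C u = v := by
  set ψ : ℂ → H := psiFun R z₀ ψ₀ with hψdef
  have hψ : IsDefectField S.A ψ := isDefectField_psiFun S hB hR hres hz₀ hψ₀ne hψ₀
  have hdom : ∀ C : H → H, IsConjugation C →
      (∀ φ : S.A.domain, ∃ h : C (φ : H) ∈ S.A.domain, S.A ⟨C (φ : H), h⟩ = C (S.A φ)) →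
      ∀ v ∈ S.A.domain, C v ∈ S.A.domain ∧ ∃ u ∈ S.A.domain, C u = v := by
    intro C hC h v hv
    obtain ⟨hCv, -⟩ := h ⟨v, hv⟩
    exact ⟨hCv, C v, hCv, hC.invol v⟩
  have hbij : ∀ C : H → H, IsConjugation C → Function.Bijective C := fun C hC =>
    Function.Involutive.bijective hC.invol
  rcases eq_or_ne μ 0 with rfl | hμ
  · -- For `μ = 0` the exceptional set is all of `ℂ`, so the transform gives no information and the
    -- conjugation exchanging `ψ z` and `ψ z̄` is used.
    obtain ⟨C, hC, hCψ⟩ := hψ.exists_conjugation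
    have hreal : ∀ φ : S.A.domain, ∃ h : C (φ : H) ∈ S.A.domain,
        S.A ⟨C (φ : H), h⟩ = C (S.A φ) := by
      refine hψ.real (D := {w | w.im ≠ 0}) (fun w hw => subset_closure hw) (fun w hw => hw)
        (a := fun _ => 1) fun w hw x => ?_
      have hw' : (conj w).im ≠ 0 := by simpa using hw
      have h1 := hC.inner_eq (ψ (conj w)) x
      rw [hCψ _ hw', Complex.conj_conj] at h1
      rw [h1, one_mul, inner_conj_symm]
    refine ⟨C, hC, hbij C hC, ?_, ?_, hreal, hdom C hC hreal⟩
    · have := hC.smul 0 0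
      simpa using this
    · intro φ z hz
      refine absurd (fun hsplit => ?_) hz
      have hmem : ∀ c : ℂ, (0 : H) - c • (0 : H) ∈ ranShift S.A z := fun c => by
        rw [smul_zero, sub_zero]
        exact ⟨0, by simp⟩
      exact zero_ne_one ((hsplit 0).unique (hmem 0) (hmem 1))
  · set D : Set ℂ := {z : ℂ | z.im ≠ 0 ∧ ⟪ψ z, μ⟫ ≠ 0} with hDdef
    have him : ∀ z : ℂ, z.im ≠ 0 → (conj z).im ≠ 0 := fun z hz => by simpa using hz
    have hzero : ∀ z : ℂ, z.im ≠ 0 → ⟪ψ z, μ⟫ = 0 → ⟪ψ (conj z), μ⟫ = 0 := by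
      intro z hz h
      rw [← hψ.mem_Smu_iff μ hz, hSmuconj, hψ.mem_Smu_iff μ (him z hz), Complex.conj_conj]
      exact h
    have hDconj : ∀ w ∈ D, conj w ∈ D := fun w hw =>
      ⟨him w hw.1, fun h => hw.2 (by simpa using hzero _ (him w hw.1) h)⟩
    have hD : ∀ w : ℂ, w.im ≠ 0 → w ∈ closure D := hψ.mem_closure_ne_zero hμ hzero
    have huniq : ∀ x y : H, (∀ w ∈ D, ⟪ψ w, x⟫ = ⟪ψ w, y⟫) → x = y := fun x y h =>
      sub_eq_zero.1 (hψ.eq_zero_of_dense hD fun w hw => by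
        rw [inner_sub_right, h w hw, sub_self])
    choose C hCn hC using hChat
    set a : ℂ → ℂ := fun w => ⟪ψ w, μ⟫ * (conj ⟪ψ (conj w), μ⟫)⁻¹ with ha
    have hCa : ∀ w ∈ D, ∀ x : H, ⟪ψ w, C x⟫ = a w * conj ⟪ψ (conj w), x⟫ := by
      intro w hw x
      have hS : conj w ∉ Smu S.A μ := by
        rw [hψ.mem_Smu_iff μ (him w hw.1), Complex.conj_conj]
        exact hw.2
      have h1 := hC x (conj w) hS (hres _ (him w hw.1))
      simp only [xiFun, Complex.conj_conj, ← hψdef, inner_smul_left, map_inv₀, map_mul,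
        inner_conj_symm] at h1
      have h2 : ⟪ψ w, C x⟫ = ⟪ψ w, μ⟫ * (⟪ψ w, μ⟫⁻¹ * ⟪ψ w, C x⟫) := by
        rw [mul_inv_cancel_left₀ hw.2]
      rw [h2, h1, ha]
      simp only [inner_conj_symm]
      ring
    have hainv : ∀ w ∈ D, a w * conj (a (conj w)) = 1 := by
      intro w hw
      have h1 := hw.2
      have h2 : conj ⟪ψ (conj w), μ⟫ ≠ 0 := (map_ne_zero _).2 (hDconj w hw).2
      simp only [ha, map_mul, map_inv₀, Complex.conj_conj]
      field_simp
    have hadd : ∀ u v : H, C (u + v) = C u + C v := fun u v => huniq _ _ fun w hw => by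
      rw [inner_add_right, hCa w hw, hCa w hw, hCa w hw, inner_add_right, map_add, mul_add]
    have hsmul : ∀ (c : ℂ) (v : H), C (c • v) = conj c • C v := fun c v =>
      huniq _ _ fun w hw => by
        rw [inner_smul_right, hCa w hw, hCa w hw, inner_smul_right, map_mul]
        ring
    have hinv : ∀ v : H, C (C v) = v := fun v => huniq _ _ fun w hw => by
      rw [hCa w hw, hCa _ (hDconj w hw), map_mul, ← mul_assoc, hainv w hw, one_mul,
        Complex.conj_conj, Complex.conj_conj]
    have hconj : IsConjugation C := isConjugation_of_norm hadd hsmul hinv hCn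
    have hreal := hψ.real hD (fun w hw => hw.1) hCa
    refine ⟨C, hconj, hbij C hconj, ?_, hC, hreal, hdom C hconj hreal⟩
    refine huniq _ _ fun w hw => ?_
    have h2 : conj ⟪ψ (conj w), μ⟫ ≠ 0 := (map_ne_zero _).2 (hDconj w hw).2
    rw [hCa w hw, ha, inv_mul_cancel_right₀ h2]


end
end
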